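/- Assume γL² < 1 and set α := (1 − γL²)/(4L³). Let (w_t)_{t≥0} be a sequence in W such that for every t, w_{t+1} is the metric projection of w_t + α·ḡ(w_t) onto W, and let w* ∈ W be a fixed point of this projected update (w* is the metric projection of w* + α·ḡ(w*) onto W). Then for every T ≥ 1, writing w̄_T := (1/T)·Σ_{t=0}^{T−1} w_t, we have Σ_s D(s)·⟨x(s), w* − w̄_T⟩² ≤ (2L²/(1 − γL²))²·‖w* − w_0‖₂²/T. -/

import Mathlib

open scoped RealInnerProductSpace BigOperators
open Finset

/-- The per-sample TD update
`g(w; s, s') := (f(r(s,s') + γ⟨x(s'), w⟩) − f(⟨x(s), w⟩)) • x(s)`. -/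
noncomputable def tdSample {S : Type*} {d : ℕ} (x : S → EuclideanSpace ℝ (Fin d))
    (r : S → S → ℝ) (γ : ℝ) (f : ℝ → ℝ) (w : EuclideanSpace ℝ (Fin d)) (s s' : S) :
    EuclideanSpace ℝ (Fin d) :=
  (f (r s s' + γ * ⟪x s', w⟫) - f ⟪x s, w⟫) • x s

/-- The expected TD update `ḡ(w) := Σ_{s,s'} D(s) P(s,s') g(w; s, s')`. -/
noncomputable def tdExpected {S : Type*} [Fintype S] {d : ℕ} (D : S → ℝ) (P : S → S → ℝ)
    (x : S → EuclideanSpace ℝ (Fin d)) (r : S → S → ℝ) (γ : ℝ) (f : ℝ → ℝ)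
    (w : EuclideanSpace ℝ (Fin d)) : EuclideanSpace ℝ (Fin d) :=
  ∑ s, ∑ s', (D s * P s s') • tdSample x r γ f w s s'

section Hilbert

variable {E : Type*} [NormedAddCommGroup E] [InnerProductSpace ℝ E]

/-- Variational inequality for a metric projection onto a convex set. -/
lemma inner_sub_le_zero_of_isProj {K : Set E} (hK : Convex ℝ K) {v p u : E} (hp : p ∈ K)
    (hmin : ∀ u ∈ K, ‖v - p‖ ≤ ‖v - u‖) (hu : u ∈ K) : ⟪v - p, u - p⟫ ≤ 0 := by
  have : Nonempty K := ⟨⟨p, hp⟩⟩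
  refine (norm_eq_iInf_iff_real_inner_le_zero hK hp).1 (le_antisymm ?_ ?_) u hu
  · exact le_ciInf fun u => hmin u u.2
  · exact ciInf_le ⟨0, by rintro _ ⟨u, rfl⟩; exact norm_nonneg _⟩ (⟨p, hp⟩ : K)

/-- Metric projection onto a convex set is nonexpansive. -/
lemma norm_sub_le_of_isProj {K : Set E} (hK : Convex ℝ K) {v v' p p' : E} (hp : p ∈ K)
    (hp' : p' ∈ K) (hmin : ∀ u ∈ K, ‖v - p‖ ≤ ‖v - u‖)
    (hmin' : ∀ u ∈ K, ‖v' - p'‖ ≤ ‖v' - u‖) : ‖p - p'‖ ≤ ‖v - v'‖ := by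
  have h := inner_sub_le_zero_of_isProj hK hp hmin hp'
  have h' := inner_sub_le_zero_of_isProj hK hp' hmin' hp
  have key : ‖p - p'‖ ^ 2 ≤ ⟪v - v', p - p'⟫ := by
    have e : ⟪v - v', p - p'⟫ - ‖p - p'‖ ^ 2 = - ⟪v - p, p' - p⟫ - ⟪v' - p', p - p'⟫ := by
      rw [← real_inner_self_eq_norm_sq]
      simp only [inner_sub_left, inner_sub_right]
      ring
    linarith
  have cs := real_inner_le_norm (v - v') (p - p')
  rcases (norm_nonneg (p - p')).eq_or_lt with h0 | h0
  · rw [← h0]; exact norm_nonneg _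
  · exact le_of_mul_le_mul_right (by nlinarith) h0

/-- Jensen's inequality for the squared norm. -/
lemma norm_sum_smul_sq_le {ι : Type*} (t : Finset ι) (p : ι → ℝ) (v : ι → E)
    (hp : ∀ i ∈ t, 0 ≤ p i) (hp1 : ∑ i ∈ t, p i = 1) :
    ‖∑ i ∈ t, p i • v i‖ ^ 2 ≤ ∑ i ∈ t, p i * ‖v i‖ ^ 2 := by
  have hc : ConvexOn ℝ Set.univ fun v : E => ‖v‖ ^ 2 :=
    convexOn_univ_norm.pow (fun _ _ => norm_nonneg _) 2
  simpa using hc.map_sum_le hp hp1 (fun i _ => Set.mem_univ (v i))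

end Hilbert

/-- A strictly increasing function expanding distances by at least `1 / L` is strongly monotone. -/
lemma StrictMono.sq_div_le_mul_sub {f : ℝ → ℝ} (hf : StrictMono f) {L : ℝ}
    (hlow : ∀ a b : ℝ, (1 / L) * |a - b| ≤ |f a - f b|) (a b : ℝ) :
    (1 / L) * (a - b) ^ 2 ≤ (f a - f b) * (a - b) := by
  have hm : 0 ≤ (f a - f b) * (a - b) := by
    rcases le_total a b with h | h
    · exact mul_nonneg_of_nonpos_of_nonpos (sub_nonpos.2 (hf.monotone h)) (sub_nonpos.2 h)
    · exact mul_nonneg (sub_nonneg.2 (hf.monotone h)) (sub_nonneg.2 h)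
  rw [← abs_of_nonneg hm, abs_mul, ← sq_abs (a - b)]
  nlinarith [mul_le_mul_of_nonneg_right (hlow a b) (abs_nonneg (a - b))]

section Stationary

variable {S : Type*} [Fintype S] {D : S → ℝ} {P : S → S → ℝ}

lemma sum_sum_mul_fst (hP1 : ∀ s, ∑ s', P s s' = 1) (φ : S → ℝ) :
    ∑ s, ∑ s', D s * P s s' * φ s = ∑ s, D s * φ s := by
  refine sum_congr rfl fun s _ => ?_
  rw [← sum_mul, ← mul_sum, hP1, mul_one]

lemma sum_sum_mul_snd (hstat : ∀ s', ∑ s, D s * P s s' = D s') (φ : S → ℝ) :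
    ∑ s, ∑ s', D s * P s s' * φ s' = ∑ s, D s * φ s := by
  rw [sum_comm]
  refine sum_congr rfl fun s _ => ?_
  rw [← sum_mul, hstat]

variable {d : ℕ} {x : S → EuclideanSpace ℝ (Fin d)} {r : S → S → ℝ} {γ L : ℝ} {f : ℝ → ℝ}

lemma tdExpected_sub (v w : EuclideanSpace ℝ (Fin d)) :
    tdExpected D P x r γ f v - tdExpected D P x r γ f w =
      ∑ s, ∑ s', (D s * P s s') • (((f (r s s' + γ * ⟪x s', v⟫) - f (r s s' + γ * ⟪x s', w⟫))
        - (f ⟪x s, v⟫ - f ⟪x s, w⟫)) • x s) := by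
  simp only [tdExpected, tdSample, ← sum_sub_distrib, ← smul_sub, ← sub_smul]
  refine sum_congr rfl fun s _ => sum_congr rfl fun s' _ => ?_
  congr 2
  ring

lemma abs_sub_bootstrap_le (hγ0 : 0 ≤ γ) (hup : ∀ a b : ℝ, |f a - f b| ≤ L * |a - b|)
    (c : ℝ) (y v w : EuclideanSpace ℝ (Fin d)) :
    |f (c + γ * ⟪y, v⟫) - f (c + γ * ⟪y, w⟫)| ≤ L * γ * |⟪y, w - v⟫| := by
  refine (hup _ _).trans_eq ?_
  rw [inner_sub_right, abs_sub_comm ⟪y, w⟫, add_sub_add_left_eq_sub, ← mul_sub, abs_mul,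
    abs_of_nonneg hγ0, mul_assoc]

/-- The expected TD update points towards any reference point, up to its value there. -/
lemma le_inner_tdExpected_sub (hD : ∀ s, 0 ≤ D s) (hP : ∀ s s', 0 ≤ P s s')
    (hP1 : ∀ s, ∑ s', P s s' = 1) (hstat : ∀ s', ∑ s, D s * P s s' = D s')
    (hγ0 : 0 ≤ γ) (hL : 0 < L) (hf : StrictMono f)
    (hlow : ∀ a b : ℝ, (1 / L) * |a - b| ≤ |f a - f b|)
    (hup : ∀ a b : ℝ, |f a - f b| ≤ L * |a - b|) (v w : EuclideanSpace ℝ (Fin d)) :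
    (1 / L - L * γ) * ∑ s, D s * ⟪x s, w - v⟫ ^ 2 ≤
      ⟪tdExpected D P x r γ f v - tdExpected D P x r γ f w, w - v⟫ := by
  set z : S → ℝ := fun s => ⟪x s, w - v⟫ with hz
  have e : (1 / L - L * γ) * ∑ s, D s * z s ^ 2 = ∑ s, ∑ s', D s * P s s' *
      ((1 / L - L * γ / 2) * z s ^ 2 - L * γ / 2 * z s' ^ 2) := by
    simp only [mul_sub, sum_sub_distrib]
    rw [sum_sum_mul_fst hP1 fun s => (1 / L - L * γ / 2) * z s ^ 2,
      sum_sum_mul_snd hstat fun s => L * γ / 2 * z s ^ 2, mul_sum, ← sum_sub_distrib]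
    exact sum_congr rfl fun s _ => by ring
  rw [tdExpected_sub, sum_inner]
  simp only [sum_inner, real_inner_smul_left]
  refine e.trans_le (sum_le_sum fun s _ => sum_le_sum fun s' _ =>
    mul_le_mul_of_nonneg_left ?_ (mul_nonneg (hD s) (hP s s')))
  have hA := abs_sub_bootstrap_le hγ0 hup (r s s') (x s') v w
  have hB := hf.sq_div_le_mul_sub hlow ⟪x s, v⟫ ⟪x s, w⟫
  have hzs : ⟪x s, v⟫ - ⟪x s, w⟫ = - z s := by rw [hz]; simp only [inner_sub_right]; ring
  rw [hzs] at hB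
  change |_| ≤ L * γ * |z s'| at hA
  change _ ≤ _ * z s
  have hAz := neg_abs_le ((f (r s s' + γ * ⟪x s', v⟫) - f (r s s' + γ * ⟪x s', w⟫)) * z s)
  rw [abs_mul] at hAz
  have h1 := mul_le_mul_of_nonneg_right hA (abs_nonneg (z s))
  have h2 : L * γ * (2 * |z s'| * |z s|) ≤ L * γ * (z s' ^ 2 + z s ^ 2) := by
    refine mul_le_mul_of_nonneg_left ?_ (by positivity)
    have := two_mul_le_add_sq |z s'| |z s|
    simpa only [sq_abs] using this
  linarith

/-- Differences of the expected TD update are controlled by differences of values. -/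
lemma norm_tdExpected_sub_sq_le (hD : ∀ s, 0 ≤ D s) (hD1 : ∑ s, D s = 1)
    (hP : ∀ s s', 0 ≤ P s s') (hP1 : ∀ s, ∑ s', P s s' = 1)
    (hstat : ∀ s', ∑ s, D s * P s s' = D s') (hx : ∀ s, ‖x s‖ ≤ 1)
    (hγ0 : 0 ≤ γ) (hγ1 : γ ≤ 1) (hL : 0 ≤ L)
    (hup : ∀ a b : ℝ, |f a - f b| ≤ L * |a - b|) (v w : EuclideanSpace ℝ (Fin d)) :
    ‖tdExpected D P x r γ f v - tdExpected D P x r γ f w‖ ^ 2 ≤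
      4 * L ^ 2 * ∑ s, D s * ⟪x s, w - v⟫ ^ 2 := by
  set z : S → ℝ := fun s => ⟪x s, w - v⟫ with hz
  have e : ∑ s, ∑ s', D s * P s s' * (2 * L ^ 2 * z s ^ 2 + 2 * L ^ 2 * z s' ^ 2) =
      4 * L ^ 2 * ∑ s, D s * z s ^ 2 := by
    simp only [mul_add, sum_add_distrib]
    rw [sum_sum_mul_fst hP1 fun s => 2 * L ^ 2 * z s ^ 2,
      sum_sum_mul_snd hstat fun s => 2 * L ^ 2 * z s ^ 2, mul_sum, ← sum_add_distrib]
    exact sum_congr rfl fun s _ => by ring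
  have hprob : ∑ q : S × S, D q.1 * P q.1 q.2 = 1 := by
    rw [Fintype.sum_prod_type]
    simpa [hD1] using sum_sum_mul_fst (D := D) hP1 fun _ => (1 : ℝ)
  rw [tdExpected_sub, ← Fintype.sum_prod_type' (f := fun s s' => (D s * P s s') •
    (((f (r s s' + γ * ⟪x s', v⟫) - f (r s s' + γ * ⟪x s', w⟫))
        - (f ⟪x s, v⟫ - f ⟪x s, w⟫)) • x s))]
  refine (norm_sum_smul_sq_le _ _ _ (fun q _ => mul_nonneg (hD _) (hP _ _)) hprob).trans ?_
  rw [← e, Fintype.sum_prod_type]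
  refine sum_le_sum fun s _ => sum_le_sum fun s' _ =>
    mul_le_mul_of_nonneg_left ?_ (mul_nonneg (hD s) (hP s s'))
  have hA := abs_sub_bootstrap_le hγ0 hup (r s s') (x s') v w
  have hB := hup ⟪x s, v⟫ ⟪x s, w⟫
  rw [abs_sub_comm ⟪x s, v⟫, ← inner_sub_right] at hB
  change |_| ≤ L * γ * |z s'| at hA
  change |_| ≤ L * |z s| at hB
  have hA' : L * γ * |z s'| ≤ L * |z s'| :=
    mul_le_mul_of_nonneg_right (mul_le_of_le_one_right hL hγ1) (abs_nonneg _)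
  have hAB := (abs_sub _ _).trans (add_le_add (hA.trans hA') hB)
  have hn : ‖((f (r s s' + γ * ⟪x s', v⟫) - f (r s s' + γ * ⟪x s', w⟫))
        - (f ⟪x s, v⟫ - f ⟪x s, w⟫)) • x s‖ ≤ L * |z s'| + L * |z s| := by
    rw [norm_smul, Real.norm_eq_abs]
    exact (mul_le_of_le_one_right (abs_nonneg _) (hx s)).trans hAB
  refine (pow_le_pow_left₀ (norm_nonneg _) hn 2).trans ?_
  rw [← sq_abs (z s), ← sq_abs (z s')]
  nlinarith [sq_nonneg (L * |z s'| - L * |z s|)]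

end Stationary

/-- averaged-iterate convergence of the projected expected TD update:
for the averaged iterate `w̄_T = (1/T) Σ_{t<T} w_t`,
`Σ_s D(s)⟨x(s), w* − w̄_T⟩² ≤ (2L²/(1 − γL²))² ‖w* − w₀‖²/T`. -/
theorem td_expected_update_average_rate {S : Type*} [Fintype S] [Nonempty S] {d : ℕ}
    (D : S → ℝ) (P : S → S → ℝ) (x : S → EuclideanSpace ℝ (Fin d))
    (r : S → S → ℝ) (γ L : ℝ) (f : ℝ → ℝ)
    (hD : ∀ s, 0 ≤ D s) (hD1 : ∑ s, D s = 1)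
    (hP : ∀ s s', 0 ≤ P s s') (hP1 : ∀ s, ∑ s', P s s' = 1)
    (hstat : ∀ s', ∑ s, D s * P s s' = D s')
    (hx : ∀ s, ‖x s‖ ≤ 1)
    (hγ0 : 0 ≤ γ) (hγ1 : γ < 1) (hL : 1 ≤ L)
    (hf : StrictMono f)
    (hfLip : ∀ a b : ℝ, (1 / L) * |a - b| ≤ |f a - f b| ∧ |f a - f b| ≤ L * |a - b|)
    (W : Set (EuclideanSpace ℝ (Fin d)))
    (hWne : W.Nonempty) (hWcpt : IsCompact W) (hWcvx : Convex ℝ W)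
    (hγL : γ * L ^ 2 < 1)
    (w : ℕ → EuclideanSpace ℝ (Fin d)) (hwW : ∀ t, w t ∈ W)
    (hupd : ∀ t, ∀ u ∈ W,
      ‖w t + ((1 - γ * L ^ 2) / (4 * L ^ 3)) • tdExpected D P x r γ f (w t) - w (t + 1)‖ ≤
        ‖w t + ((1 - γ * L ^ 2) / (4 * L ^ 3)) • tdExpected D P x r γ f (w t) - u‖)
    (wstar : EuclideanSpace ℝ (Fin d)) (hwstar : wstar ∈ W)
    (hfix : ∀ u ∈ W,
      ‖wstar + ((1 - γ * L ^ 2) / (4 * L ^ 3)) • tdExpected D P x r γ f wstar - wstar‖ ≤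
        ‖wstar + ((1 - γ * L ^ 2) / (4 * L ^ 3)) • tdExpected D P x r γ f wstar - u‖)
    (T : ℕ) (hT : 1 ≤ T) :
    ∑ s, D s * ⟪x s, wstar - (T : ℝ)⁻¹ • ∑ t ∈ Finset.range T, w t⟫ ^ 2 ≤
      (2 * L ^ 2 / (1 - γ * L ^ 2)) ^ 2 * ‖wstar - w 0‖ ^ 2 / T := by
  have hL0 : 0 < L := by linarith
  have hlow := fun a b => (hfLip a b).1
  have hup := fun a b => (hfLip a b).2
  set c : ℝ := 1 - γ * L ^ 2 with hc
  have hc0 : 0 < c := sub_pos.2 hγL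
  set α : ℝ := c / (4 * L ^ 3) with hα
  have hα0 : 0 ≤ α := by positivity
  set V : ℕ → ℝ := fun t => ∑ s, D s * ⟪x s, wstar - w t⟫ ^ 2 with hV
  have hdescent : ∀ t, (c / (2 * L ^ 2)) ^ 2 * V t ≤
      ‖wstar - w t‖ ^ 2 - ‖wstar - w (t + 1)‖ ^ 2 := by
    intro t
    have hproj := norm_sub_le_of_isProj hWcvx hwstar (hwW (t + 1)) hfix (hupd t)
    have hcoer := le_inner_tdExpected_sub (x := x) (r := r) hD hP hP1 hstat hγ0 hL0 hf hlow hup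
      (w t) wstar
    have hnorm := norm_tdExpected_sub_sq_le (x := x) (r := r) hD hD1 hP hP1 hstat hx hγ0 hγ1.le
      hL0.le hup (w t) wstar
    set h := tdExpected D P x r γ f (w t) - tdExpected D P x r γ f wstar with hh
    have hsplit : wstar + α • tdExpected D P x r γ f wstar -
        (w t + α • tdExpected D P x r γ f (w t)) = (wstar - w t) - α • h := by
      rw [hh, smul_sub]; abel
    rw [hsplit] at hproj
    have hsq := pow_le_pow_left₀ (norm_nonneg _) hproj 2
    rw [norm_sub_sq_real (wstar - w t), real_inner_smul_right, real_inner_comm, norm_smul, mul_pow,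
      Real.norm_eq_abs, sq_abs] at hsq
    have h1 := mul_le_mul_of_nonneg_left hcoer hα0
    have h2 := mul_le_mul_of_nonneg_left hnorm (sq_nonneg α)
    have e : (c / (2 * L ^ 2)) ^ 2 * V t =
        2 * (α * ((1 / L - L * γ) * V t)) - α ^ 2 * (4 * L ^ 2 * V t) := by
      have : 1 / L - L * γ = c / L := by rw [hc]; field_simp
      rw [this, hα]
      field_simp
      ring
    rw [e]
    linarith
  have hsum : (c / (2 * L ^ 2)) ^ 2 * ∑ t ∈ range T, V t ≤ ‖wstar - w 0‖ ^ 2 := by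
    rw [mul_sum]
    refine (sum_le_sum fun t _ => hdescent t).trans ?_
    rw [sum_range_sub' fun t => ‖wstar - w t‖ ^ 2]
    exact sub_le_self _ (sq_nonneg _)
  have hT0 : (0 : ℝ) < T := by exact_mod_cast hT
  have hTsum : ∑ _t ∈ range T, (T : ℝ)⁻¹ = 1 := by simp [hT0.ne']
  have havg : wstar - (T : ℝ)⁻¹ • ∑ t ∈ range T, w t =
      ∑ t ∈ range T, (T : ℝ)⁻¹ • (wstar - w t) := by
    simp only [smul_sub, sum_sub_distrib]
    rw [← sum_smul, hTsum, one_smul, smul_sum]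
  have hjensen : ∑ s, D s * ⟪x s, wstar - (T : ℝ)⁻¹ • ∑ t ∈ range T, w t⟫ ^ 2 ≤
      (T : ℝ)⁻¹ * ∑ t ∈ range T, V t := by
    rw [mul_sum]
    simp only [hV, mul_sum]
    rw [sum_comm]
    refine sum_le_sum fun s _ => ?_
    have hj := norm_sum_smul_sq_le (range T) (fun _ => (T : ℝ)⁻¹) (fun t => ⟪x s, wstar - w t⟫)
      (fun _ _ => by positivity) hTsum
    simp only [Real.norm_eq_abs, sq_abs, smul_eq_mul] at hj
    rw [havg, inner_sum]
    simp only [real_inner_smul_right]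
    refine (mul_le_mul_of_nonneg_left hj (hD s)).trans_eq ?_
    rw [mul_sum]
    exact sum_congr rfl fun t _ => by ring
  refine hjensen.trans ?_
  rw [div_eq_inv_mul _ (T : ℝ)]
  refine mul_le_mul_of_nonneg_left ?_ (by positivity)
  have := mul_le_mul_of_nonneg_left hsum (sq_nonneg (2 * L ^ 2 / c))
  rwa [← mul_assoc, ← mul_pow, div_mul_div_cancel₀ hc0.ne', div_self (by positivity), one_pow,
    one_mul] at this
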